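/- Let q* be the optimal action-value function of a finite MDP and let T*' be the weighted Bellman optimality operator associated to a fixed behavior policy π, satisfying the pseudo-contraction ‖T*' q − q*‖_∞ ≤ γ'·‖q − q*‖_∞ for some γ' ∈ [0,1) and all q. Let p ≥ 2 be large enough that η := 1 − γ'·(|S|·|A|)^{1/p} > 0, and set f(q) := T*' q. Then for all q ∈ ℝ^{S×A}: ⟨∇(½‖q − q*‖ₚ²), f(q) − q⟩ ≤ −η·‖q − q*‖ₚ², i.e., f satisfies the Lyapunov drift condition with the Lyapunov function φ(x) = ½‖x‖ₚ². -/

import Mathlib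

/-!
Write `N` for the `ℓₚ` norm, `x = q - q*` and `w = f q - q*`, so that `f q - q = w - x`. The
gradient of `½N²` at `x` is `N x • ∇N x`, and convexity of `N` gives `⟪∇N x, w - x⟫ ≤ N w - N x`;
hence the drift is at most `N x (N w - N x)`. Comparing `N` with the sup norm,
`N w ≤ |S × A|^{1/p} ‖w‖_∞ ≤ |S × A|^{1/p} γ' ‖x‖_∞ ≤ |S × A|^{1/p} γ' N x`.
-/

open Finset
open scoped RealInnerProductSpace

variable {S A : Type*} [Fintype S] [Fintype A] [Nonempty S] [Nonempty A]

/-- The Bellman optimality operator of a finite MDP. -/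
noncomputable def bellmanOpt (r : S × A → ℝ) (P : S × A → S → ℝ) (γ : ℝ)
    (q : S × A → ℝ) : S × A → ℝ :=
  fun y => r y + γ * ∑ s', P y s' * ⨆ a', q (s', a')

/-- The weighted Bellman optimality operator with state-action weights `d`. -/
noncomputable def weightedBellmanOpt (r : S × A → ℝ) (P : S × A → S → ℝ) (γ : ℝ)
    (d : S × A → ℝ) (q : S × A → ℝ) : S × A → ℝ :=
  fun y => d y * (bellmanOpt r P γ q y - q y) + q y

/-- The ℓₚ norm of a vector, for a real exponent `p`. -/
noncomputable def lpNorm {ι : Type*} [Fintype ι] (p : ℝ) (x : EuclideanSpace ℝ ι) : ℝ :=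
  (∑ i, |x i| ^ p) ^ (1 / p)

section Convex

variable {E : Type*} {s : Set E} {g : E → ℝ} {x y : E}

lemma hasLineDerivAt_le_sub_of_convexOn [AddCommGroup E] [Module ℝ E] {g' : ℝ}
    (hg : ConvexOn ℝ s g) (hx : x ∈ s) (hy : y ∈ s) (hg' : HasLineDerivAt ℝ g g' x (y - x)) :
    g' ≤ g y - g x := by
  have hline : ConvexOn ℝ (AffineMap.lineMap x y ⁻¹' s) (g ∘ AffineMap.lineMap x y) :=
    hg.comp_affineMap (AffineMap.lineMap x y : ℝ →ᵃ[ℝ] E)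
  have hderiv : HasDerivAt (g ∘ AffineMap.lineMap x y) g' (0 : ℝ) := by
    refine HasDerivAt.congr_of_eventuallyEq hg' (.of_forall fun t => ?_)
    simp only [Function.comp_apply, AffineMap.lineMap_apply_module', add_comm]
  simpa [slope_def_field] using
    hline.le_slope_of_hasDerivAt (by simpa using hx) (by simpa using hy) zero_lt_one hderiv

variable [NormedAddCommGroup E] [InnerProductSpace ℝ E] [CompleteSpace E]

lemma inner_gradient_half_sq_sub_le_of_convexOn (hg : ConvexOn ℝ s g) (hx : x ∈ s) (hy : y ∈ s)
    (hgx : 0 ≤ g x) (hd : g x ≠ 0 → DifferentiableAt ℝ g x) :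
    ⟪gradient (fun z => (1 / 2) * g z ^ 2) x, y - x⟫ ≤ g x * (g y - g x) := by
  rw [inner_gradient_left]
  rcases eq_or_ne (g x) 0 with h0 | h0
  · -- `x` minimizes `g ^ 2`, so the gradient is `0` even where it is only the junk value.
    have hmin : IsLocalMin (fun z => (1 / 2) * g z ^ 2) x :=
      Filter.Eventually.of_forall fun z => by simpa [h0] using sq_nonneg (g z)
    rw [hmin.fderiv_eq_zero, h0, zero_mul, zero_apply]
  · have hsq : HasFDerivAt (fun z => (1 / 2) * g z ^ 2) (g x • fderiv ℝ g x) x := by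
      convert! ((hd h0).hasFDerivAt.pow 2).const_mul (1 / 2) using 1
      simp [smul_smul]
    rw [hsq.fderiv, smul_apply, smul_eq_mul]
    exact mul_le_mul_of_nonneg_left
      (hasLineDerivAt_le_sub_of_convexOn hg hx hy ((hd h0).hasFDerivAt.hasLineDerivAt _)) hgx

end Convex

section LpNorm

variable {ι : Type*} [Fintype ι] {p : ℝ}

lemma lpNorm_nonneg (p : ℝ) (x : EuclideanSpace ℝ ι) : 0 ≤ lpNorm p x := by
  unfold lpNorm
  positivity

lemma lpNorm_eq_norm_toLp (hp : 0 < p) (x : EuclideanSpace ℝ ι) :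
    lpNorm p x = ‖WithLp.toLp (ENNReal.ofReal p) x.ofLp‖ := by
  have hp' : (ENNReal.ofReal p).toReal = p := ENNReal.toReal_ofReal hp.le
  simp [lpNorm, PiLp.norm_eq_sum (hp'.symm ▸ hp), hp']

lemma convexOn_lpNorm (hp : 1 ≤ p) :
    ConvexOn ℝ Set.univ (lpNorm p : EuclideanSpace ℝ ι → ℝ) := by
  have : Fact (1 ≤ ENNReal.ofReal p) := ⟨ENNReal.one_le_ofReal.2 hp⟩
  let toPiLp : EuclideanSpace ℝ ι →ₗ[ℝ] PiLp (ENNReal.ofReal p) fun _ : ι => ℝ :=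
    ((WithLp.linearEquiv 2 ℝ (ι → ℝ)).trans (WithLp.linearEquiv _ ℝ (ι → ℝ)).symm).toLinearMap
  exact (convexOn_univ_norm.comp_linearMap toPiLp).congr fun x _ =>
    (lpNorm_eq_norm_toLp (by linarith) x).symm

lemma differentiableAt_lpNorm (hp : 1 < p) {x : EuclideanSpace ℝ ι} (hx : lpNorm p x ≠ 0) :
    DifferentiableAt ℝ (lpNorm p) x := by
  have hsum_ne : ∑ i, |x i| ^ p ≠ 0 := by
    contrapose! hx
    rw [lpNorm, hx, Real.zero_rpow (by positivity)]
  have hcoord (i : ι) : DifferentiableAt ℝ (fun z : EuclideanSpace ℝ ι => |z i| ^ p) x :=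
    (hasDerivAt_abs_rpow (x i) hp).differentiableAt.comp x
      (f := fun z : EuclideanSpace ℝ ι => z i) (by fun_prop)
  exact (DifferentiableAt.fun_sum fun i _ => hcoord i).rpow_const (Or.inl hsum_ne)

lemma inner_gradient_half_lpNorm_sq_sub_le (hp : 1 < p) (x y : EuclideanSpace ℝ ι) :
    ⟪gradient (fun z : EuclideanSpace ℝ ι => (1 / 2) * lpNorm p z ^ 2) x, y - x⟫ ≤
      lpNorm p x * (lpNorm p y - lpNorm p x) :=
  inner_gradient_half_sq_sub_le_of_convexOn (convexOn_lpNorm hp.le) (Set.mem_univ x)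
    (Set.mem_univ y) (lpNorm_nonneg p x) (differentiableAt_lpNorm hp)

lemma iSup_abs_le_lpNorm (hp : 0 < p) (x : EuclideanSpace ℝ ι) : ⨆ i, |x i| ≤ lpNorm p x := by
  refine Real.iSup_le (fun i => ?_) (lpNorm_nonneg p x)
  rw [lpNorm, one_div, Real.le_rpow_inv_iff_of_pos (abs_nonneg _) (by positivity) hp]
  exact Finset.single_le_sum (f := fun i => |x i| ^ p) (fun j _ => by positivity)
    (Finset.mem_univ i)

lemma lpNorm_le_card_rpow_mul_iSup_abs (hp : 0 < p) (x : EuclideanSpace ℝ ι) :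
    lpNorm p x ≤ (Fintype.card ι : ℝ) ^ (1 / p) * ⨆ i, |x i| := by
  have hsup_nonneg : 0 ≤ ⨆ i, |x i| := Real.iSup_nonneg fun i => abs_nonneg (x i)
  have hle_sup (i : ι) : |x i| ≤ ⨆ j, |x j| :=
    le_ciSup (f := fun j => |x j|) (Set.finite_range _).bddAbove i
  calc lpNorm p x ≤ (∑ _i : ι, (⨆ j, |x j|) ^ p) ^ (1 / p) := by
        unfold lpNorm
        gcongr with i
        exact hle_sup i
    _ = (Fintype.card ι : ℝ) ^ (1 / p) * ⨆ i, |x i| := by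
        rw [Finset.sum_const, Finset.card_univ, nsmul_eq_mul,
          Real.mul_rpow (by positivity) (by positivity), one_div,
          Real.rpow_rpow_inv hsup_nonneg hp.ne']

theorem weighted_bellman_lyapunov_drift_general (hp : 1 < p) {γ' : ℝ} (hγ' : 0 ≤ γ')
    (qstar : EuclideanSpace ℝ ι) (f : EuclideanSpace ℝ ι → EuclideanSpace ℝ ι)
    (hcontraction : ∀ q, (⨆ i, |f q i - qstar i|) ≤ γ' * ⨆ i, |q i - qstar i|)
    (q : EuclideanSpace ℝ ι) :
    ⟪gradient (fun z : EuclideanSpace ℝ ι => (1 / 2) * lpNorm p z ^ 2) (q - qstar), f q - q⟫ ≤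
      -(1 - γ' * (Fintype.card ι : ℝ) ^ (1 / p)) * lpNorm p (q - qstar) ^ 2 := by
  have hp0 : 0 < p := by linarith
  have hcontract : lpNorm p (f q - qstar) ≤
      (Fintype.card ι : ℝ) ^ (1 / p) * (γ' * lpNorm p (q - qstar)) :=
    calc lpNorm p (f q - qstar)
        ≤ (Fintype.card ι : ℝ) ^ (1 / p) * ⨆ i, |(f q - qstar) i| :=
          lpNorm_le_card_rpow_mul_iSup_abs hp0 _
      _ ≤ (Fintype.card ι : ℝ) ^ (1 / p) * (γ' * ⨆ i, |(q - qstar) i|) := by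
          gcongr
          exact hcontraction q
      _ ≤ (Fintype.card ι : ℝ) ^ (1 / p) * (γ' * lpNorm p (q - qstar)) := by
          gcongr
          exact iSup_abs_le_lpNorm hp0 _
  calc ⟪gradient (fun z : EuclideanSpace ℝ ι => (1 / 2) * lpNorm p z ^ 2) (q - qstar), f q - q⟫
      ≤ lpNorm p (q - qstar) * (lpNorm p (f q - qstar) - lpNorm p (q - qstar)) := by
        simpa only [sub_sub_sub_cancel_right] using
          inner_gradient_half_lpNorm_sq_sub_le hp (q - qstar) (f q - qstar)
    _ ≤ lpNorm p (q - qstar) * ((Fintype.card ι : ℝ) ^ (1 / p) * (γ' * lpNorm p (q - qstar)) -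
          lpNorm p (q - qstar)) := by
        gcongr
        exact lpNorm_nonneg p _
    _ = -(1 - γ' * (Fintype.card ι : ℝ) ^ (1 / p)) * lpNorm p (q - qstar) ^ 2 := by ring

end LpNorm

/-- If the weighted Bellman optimality operator `T*'` is a pseudo-contraction towards
`q*` in the sup norm with modulus `γ' ∈ [0,1)`, and `p ≥ 2` is large enough that
`η := 1 − γ'(|S||A|)^{1/p} > 0`, then `f := T*'` satisfies the Lyapunov drift
condition for `φ(x) = ½‖x‖ₚ²`. -/
theorem weighted_bellman_lyapunov_drift
    (r : S × A → ℝ) (P : S × A → S → ℝ)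
    (hPnonneg : ∀ y s', 0 ≤ P y s') (hPsum : ∀ y, ∑ s', P y s' = 1)
    (γ : ℝ) (hγ0 : 0 ≤ γ) (hγ1 : γ < 1)
    (qstar : EuclideanSpace ℝ (S × A)) (hqstar : bellmanOpt r P γ qstar = qstar)
    (d : S × A → ℝ)
    (γ' : ℝ) (hγ'0 : 0 ≤ γ') (hγ'1 : γ' < 1)
    (hcontraction : ∀ q : S × A → ℝ,
      (⨆ y : S × A, |weightedBellmanOpt r P γ d q y - qstar y|) ≤
        γ' * ⨆ y : S × A, |q y - qstar y|)
    (p : ℝ) (hp : 2 ≤ p)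
    (η : ℝ) (hη : η = 1 - γ' * ((Fintype.card S * Fintype.card A : ℝ)) ^ (1 / p))
    (hηpos : 0 < η)
    (f : EuclideanSpace ℝ (S × A) → EuclideanSpace ℝ (S × A))
    (hf : ∀ q, f q = weightedBellmanOpt r P γ d q) :
    ∀ q : EuclideanSpace ℝ (S × A),
      ⟪gradient (fun z : EuclideanSpace ℝ (S × A) => (1 / 2) * lpNorm p z ^ 2)
          (q - qstar), f q - q⟫ ≤ -η * lpNorm p (q - qstar) ^ 2 := by
  subst hη
  simpa only [Fintype.card_prod, Nat.cast_mul] using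
    weighted_bellman_lyapunov_drift_general (by linarith) hγ'0 qstar f
      fun q => by simpa only [hf] using hcontraction q
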